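/- Let A₁, A₂, A₃ be hermitian 4×4 complex matrices whose joint numerical range W = W(A₁,A₂,A₃) has dimension 3. Suppose F₂ is a one-dimensional nonexposed face of W, G is a one-dimensional exposed face of W, and F₂ ∩ G = {p}. Then p is a corner point of W, or there exists a non-elliptic face H of W with F₂ ⊆ H and G ⊆ H. -/

import Mathlib

open Matrix ComplexOrder

noncomputable section

/-- A density matrix: positive semidefinite with unit trace. -/
def IsDensity {n : Type*} [Fintype n] (ρ : Matrix n n ℂ) : Prop :=
  ρ.PosSemidef ∧ ρ.trace = 1

/-- The measurement map `ρ ↦ (tr ρA₁, …, tr ρA_k)` (the traces are real for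
hermitian matrices). -/
def wpt {n : Type*} [Fintype n] {k : ℕ} (A : Fin k → Matrix n n ℂ)
    (ρ : Matrix n n ℂ) : Fin k → ℝ :=
  fun i => ((ρ * A i).trace).re

/-- The joint numerical range of `k` matrices. -/
def JNR {n : Type*} [Fintype n] {k : ℕ} (A : Fin k → Matrix n n ℂ) :
    Set (Fin k → ℝ) :=
  wpt A '' {ρ | IsDensity ρ}

/-- `F` is a face of the convex set `C`: a convex subset such that whenever an
open segment between two points of `C` meets `F`, both endpoints lie in `F`. -/
def IsFaceOf {E : Type*} [AddCommGroup E] [Module ℝ E] (C F : Set E) : Prop :=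
  Convex ℝ F ∧ IsExtreme ℝ C F

/-- The dimension of a convex set: the dimension of its affine hull. -/
def convDim {E : Type*} [AddCommGroup E] [Module ℝ E] (F : Set E) : ℕ :=
  Module.finrank ℝ (affineSpan ℝ F).direction

/-- Euclidean dot product on `Fin d → ℝ`. -/
def dotR {d : ℕ} (u v : Fin d → ℝ) : ℝ := ∑ i, u i * v i

/-- `F` is an exposed face of `C`: the set of minimizers of a linear functional. -/
def IsExposedFace {d : ℕ} (C F : Set (Fin d → ℝ)) : Prop :=
  ∃ u : Fin d → ℝ, F = {x ∈ C | ∀ y ∈ C, dotR u x ≤ dotR u y}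

/-- The normal cone of `C` at `p`. -/
def normalConeAt {d : ℕ} (C : Set (Fin d → ℝ)) (p : Fin d → ℝ) :
    Set (Fin d → ℝ) :=
  {u | ∀ y ∈ C, 0 ≤ dotR (y - p) u}

/-- `p` is a corner point of `C` if the normal cone of `C` at `p` spans `ℝ^d`. -/
def IsCornerPoint {d : ℕ} (C : Set (Fin d → ℝ)) (p : Fin d → ℝ) : Prop :=
  p ∈ C ∧ Submodule.span ℝ (normalConeAt C p) = ⊤

/-- The closed unit disk of `ℝ²`. -/
def unitDisk2 : Set (Fin 2 → ℝ) := {v | v 0 ^ 2 + v 1 ^ 2 ≤ 1}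

/-- An elliptic disk in `ℝ³`: the image of the closed unit disk of `ℝ²` under an
injective affine map. -/
def IsEllipticDisk (F : Set (Fin 3 → ℝ)) : Prop :=
  ∃ f : (Fin 2 → ℝ) →ᵃ[ℝ] (Fin 3 → ℝ), Function.Injective f ∧ F = f '' unitDisk2

/-- A non-elliptic face of `W`: a two-dimensional face that is not an elliptic
disk. -/
def IsNonEllipticFace (W F : Set (Fin 3 → ℝ)) : Prop :=
  IsFaceOf W F ∧ convDim F = 2 ∧ ¬ IsEllipticDisk F

/-- A rank-3 face of the joint numerical range of `A`. -/
def IsRank3Face {k : ℕ} (A : Fin k → Matrix (Fin 4) (Fin 4) ℂ)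
    (F : Set (Fin k → ℝ)) : Prop :=
  F.Nonempty ∧ IsFaceOf (JNR A) F ∧
    ∃ P : Matrix (Fin 4) (Fin 4) ℂ, Pᴴ = P ∧ P * P = P ∧ P.rank = 3 ∧
      ∀ ρ : Matrix (Fin 4) (Fin 4) ℂ, IsDensity ρ → (wpt A ρ ∈ F ↔ P * ρ * P = ρ)

theorem dotR_add_left {d : ℕ} (u v x : Fin d → ℝ) : dotR (u+v) x = dotR u x + dotR v x := by
  simp [dotR, add_mul, Finset.sum_add_distrib]

theorem dotR_smul_left {d : ℕ} (c : ℝ) (u x : Fin d → ℝ) : dotR (c • u) x = c * dotR u x := by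
  simp [dotR, mul_assoc, Finset.mul_sum]

theorem dotR_add_right {d : ℕ} (u x y : Fin d → ℝ) : dotR u (x+y) = dotR u x + dotR u y := by
  simp [dotR, mul_add, Finset.sum_add_distrib]

theorem dotR_sub_right {d : ℕ} (u x y : Fin d → ℝ) : dotR u (x-y) = dotR u x - dotR u y := by
  simp [dotR, mul_sub, Finset.sum_sub_distrib]

theorem dotR_smul_right {d : ℕ} (c : ℝ) (u x : Fin d → ℝ) : dotR u (c • x) = c * dotR u x := by
  simp only [dotR, Finset.mul_sum, Pi.smul_apply, smul_eq_mul]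
  exact Finset.sum_congr rfl fun i _ => by ring

theorem dotR_comm {d : ℕ} (u x : Fin d → ℝ) : dotR u x = dotR x u := by
  simp [dotR, mul_comm]

theorem dotR_self_pos {d : ℕ} (u : Fin d → ℝ) (h : dotR u u = 0) : u = 0 := by
  unfold dotR at h
  rw [Finset.sum_eq_zero_iff_of_nonneg (fun i _ => mul_self_nonneg _)] at h
  ext i
  simpa using h i (Finset.mem_univ i)

def dotL {d : ℕ} (u : Fin d → ℝ) : (Fin d → ℝ) →ₗ[ℝ] ℝ where
  toFun := dotR u
  map_add' := dotR_add_right u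
  map_smul' c x := by simp [dotR_smul_right]

theorem dim1 {E : Type*} [AddCommGroup E] [Module ℝ E] (F : Set E) (p : E) (hp : p ∈ F)
    (h : convDim F = 1) : ∃ q ∈ F, q ≠ p ∧ ∀ z ∈ F, ∃ t : ℝ, z = p + t • (q - p) := by
  unfold convDim at h
  rw [direction_affineSpan] at h
  have : ∃ q ∈ F, q ≠ p := by
    by_contra hcon
    push Not at hcon
    have : F = {p} := by
      ext x; constructor
      · intro hx; exact hcon x hx
      · rintro rfl; exact hp
    rw [this, vectorSpan_singleton] at h
    simp at h
  obtain ⟨q, hq, hqp⟩ := this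
  refine ⟨q, hq, hqp, fun z hz => ?_⟩
  have h1 := vsub_mem_vectorSpan ℝ hq hp
  have h2 := vsub_mem_vectorSpan ℝ hz hp
  obtain ⟨c, hc⟩ := (finrank_eq_one_iff_of_nonzero' (⟨q - p, h1⟩ : vectorSpan ℝ F)
    (by simpa [Subtype.ext_iff, sub_eq_zero] using hqp)).1 h ⟨z - p, h2⟩
  refine ⟨c, ?_⟩
  have := congrArg Subtype.val hc
  simp only [Submodule.coe_smul] at this
  rw [this]; abel

theorem line_mem {E : Type*} [AddCommGroup E] [Module ℝ E] {C F : Set E} (hF : IsFaceOf C F)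
    {x y z : E} (hx : x ∈ F) (hy : y ∈ F) (hz : z ∈ C) (t : ℝ) (h : z = x + t • (y - x)) :
    z ∈ F := by
  obtain ⟨hc, he⟩ := hF
  rcases lt_or_ge t 0 with ht | ht
  · refine he.left_mem_of_mem_openSegment hz (he.subset hy) hx ?_
    refine ⟨1/(1-t), -t/(1-t), by apply div_pos <;> linarith, by apply div_pos <;> linarith, ?_, ?_⟩
    · rw [← add_div]; exact div_self (by linarith)
    · rw [h]
      have : (1 - t) ≠ 0 := by linarith
      match_scalars <;> field_simp <;> ring
  rcases le_or_gt t 1 with ht1 | ht1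
  · rw [h]
    exact hc.add_smul_sub_mem hx hy ⟨ht, ht1⟩
  · refine he.left_mem_of_mem_openSegment hz (he.subset hx) hy ?_
    have : t ≠ 0 := by linarith
    refine ⟨1/t, (t-1)/t, by positivity, by apply div_pos <;> linarith, ?_, ?_⟩
    · field_simp; ring
    · rw [h]
      match_scalars <;> field_simp <;> ring

theorem exposed_face {d : ℕ} {C : Set (Fin d → ℝ)} (hC : Convex ℝ C) (u : Fin d → ℝ) :
    IsFaceOf C {x ∈ C | ∀ y ∈ C, dotR u x ≤ dotR u y} := by
  refine ⟨?_, ?_, ?_⟩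
  · rintro x ⟨hx, hx'⟩ y ⟨hy, hy'⟩ a b ha hb hab
    refine ⟨hC hx hy ha hb hab, fun z hz => ?_⟩
    rw [dotR_add_right, dotR_smul_right, dotR_smul_right]
    have h1 := hx' z hz
    have h2 := hy' z hz
    calc _ ≤ a * dotR u z + b * dotR u z := by gcongr
      _ = dotR u z := by rw [← add_mul, hab, one_mul]
  · exact fun x hx => hx.1
  · rintro x hx y hy z ⟨hz, hz'⟩ ⟨a, b, ha, hb, hab, rfl⟩
    refine ⟨hx, fun w hw => ?_⟩
    have h1 := hz' w hw
    have h2 := hz' y hy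
    rw [dotR_add_right, dotR_smul_right, dotR_smul_right] at h1 h2
    have hb' : b = 1 - a := by linarith
    subst hb'
    have : dotR u x ≤ dotR u y := by
      by_contra hcon; push Not at hcon
      nlinarith
    have h3 : a * dotR u x + (1-a) * dotR u x ≤ dotR u w := by nlinarith
    linarith

theorem face_mono {E : Type*} [AddCommGroup E] [Module ℝ E] {C F H : Set E} (hF : IsFaceOf C F)
    (hHC : H ⊆ C) (hFH : F ⊆ H) : IsFaceOf H F := ⟨hF.1, hF.2.mono hHC hFH⟩

/-- supporting hyperplane -/
theorem support (C F : Set (Fin 3 → ℝ)) (hC : Convex ℝ C) (hd : convDim C = 3)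
    (hF : IsFaceOf C F) (hFd : convDim F = 1) (p : Fin 3 → ℝ) (hp : p ∈ F) :
    ∃ u : Fin 3 → ℝ, u ≠ 0 ∧ (∀ y ∈ C, ∀ z ∈ F, dotR u z ≤ dotR u y) := by
  have hne : (interior C).Nonempty := by
    rw [hC.interior_nonempty_iff_affineSpan_eq_top]
    have : (affineSpan ℝ C).direction = ⊤ := by
      apply Submodule.eq_top_of_finrank_eq
      rw [show Module.finrank ℝ (affineSpan ℝ C).direction = 3 from hd]; simp
    rwa [AffineSubspace.direction_eq_top_iff_of_nonempty] at this
    exact ⟨p, subset_affineSpan _ _ (hF.2.subset hp)⟩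
  have hdis : Disjoint (interior C) F := by
    rw [Set.disjoint_left]
    intro x hx hxF
    have : C ⊆ F := by
      intro z hz
      have hcont : Filter.Tendsto (fun t : ℝ => x + t • (x - z)) (nhds 0) (nhds (x + (0:ℝ) • (x - z))) :=
        Continuous.tendsto (by fun_prop) 0
      rw [zero_smul, add_zero] at hcont
      have hev := hcont.eventually (mem_interior_iff_mem_nhds.1 hx)
      obtain ⟨ε, hε, hball⟩ := Metric.eventually_nhds_iff.1 hev
      have hm := hball (y := ε/2) (by rw [Real.dist_eq, sub_zero, abs_of_pos] <;> linarith)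
      refine hF.2.left_mem_of_mem_openSegment hz hm hxF ?_
      refine ⟨(ε/2)/(1+ε/2), 1/(1+ε/2), by positivity, by positivity, by field_simp; ring, ?_⟩
      match_scalars <;> field_simp <;> ring
    have : C = F := Set.Subset.antisymm this hF.2.subset
    rw [this, hFd] at hd; norm_num at hd
  obtain ⟨f, c, hf0, hf1, hf2⟩ := geometric_hahn_banach_of_nonempty_interior hC hF.1 hdis hne ⟨p, hp⟩
  have hfe : ∀ x, f x = ∑ i, x i * f (Pi.single i 1) := by
    intro x
    conv_lhs => rw [pi_eq_sum_univ' x]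
    rw [map_sum]
    refine Finset.sum_congr rfl fun i _ => ?_
    rw [map_smul, smul_eq_mul]
  have hdot : ∀ x, dotR (fun i => - f (Pi.single i 1)) x = - f x := by
    intro x
    rw [hfe x]
    simp [dotR, mul_comm]
  refine ⟨fun i => - f (Pi.single i 1), ?_, ?_⟩
  · intro h0
    apply hf0
    ext x
    have := hdot x
    rw [h0] at this
    simp [dotR] at this
    simpa using this
  · intro y hy z hz
    rw [hdot, hdot]
    linarith [hf1 y hy, hf2 z hz]

theorem dim2 (H : Set (Fin 3 → ℝ)) (u p q h : Fin 3 → ℝ) (hu : u ≠ 0)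
    (hp : p ∈ H) (hq : q ∈ H) (hh : h ∈ H) (hH : ∀ x ∈ H, dotR u (x - p) = 0) (hqp : q ≠ p)
    (hl : ∀ t : ℝ, h ≠ p + t • (q - p)) : convDim H = 2 := by
  unfold convDim
  rw [direction_affineSpan]
  apply le_antisymm
  · have hle : vectorSpan ℝ H ≤ LinearMap.ker (dotL u) := by
      rw [vectorSpan_eq_span_vsub_set_right ℝ hp, Submodule.span_le]
      rintro _ ⟨x, hx, rfl⟩
      exact hH x hx
    have hlt : vectorSpan ℝ H < ⊤ := by
      rw [lt_top_iff_ne_top]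
      intro ht
      rw [ht] at hle
      exact hu (dotR_self_pos u (hle (x := u) trivial))
    have := Submodule.finrank_lt hlt.ne
    simp at this
    omega
  · have h1 := vsub_mem_vectorSpan ℝ hq hp
    have h2 := vsub_mem_vectorSpan ℝ hh hp
    have hli : LinearIndependent ℝ ![(⟨q - p, h1⟩ : vectorSpan ℝ H), ⟨h - p, h2⟩] := by
      rw [LinearIndependent.pair_iff' (by simpa [Subtype.ext_iff, sub_eq_zero] using hqp)]
      intro a ha
      have := congrArg Subtype.val ha
      simp only [Submodule.coe_smul] at this
      exact hl a (by rw [this]; abel)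
    simpa using hli.fintype_card_le_finrank

theorem not_elliptic (H F : Set (Fin 3 → ℝ)) (hF : IsFaceOf H F) (x y h : Fin 3 → ℝ)
    (hx : x ∈ F) (hy : y ∈ F) (hxy : x ≠ y) (hh : h ∈ H) (hhF : h ∉ F) : ¬ IsEllipticDisk H := by
  rintro ⟨f, hf, rfl⟩
  obtain ⟨a, ha, rfl⟩ := hF.2.subset hx
  obtain ⟨b, hb, rfl⟩ := hF.2.subset hy
  obtain ⟨c, hc, rfl⟩ := hh
  have hab : a ≠ b := fun h => hxy (by rw [h])
  apply hhF
  set m : Fin 2 → ℝ := (1/2:ℝ) • a + (1/2:ℝ) • b with hm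
  have hfm : f m ∈ F := by
    have h1 : f m = (1/2:ℝ) • f a + (1/2:ℝ) • f b := by
      have := Convex.combo_affine_apply (f := f) (x := a) (y := b) (a := (1/2:ℝ)) (b := 1/2) (by norm_num)
      exact this
    rw [h1]
    exact hF.1 hx hy (by norm_num) (by norm_num) (by norm_num)
  have hpos : 0 < (a 0 - b 0)^2 + (a 1 - b 1)^2 := by
    by_contra hcon
    push Not at hcon
    apply hab
    ext i
    fin_cases i
    · simp only [Fin.zero_eta]; nlinarith [sq_nonneg (a 0 - b 0), sq_nonneg (a 1 - b 1)]
    · simp only [Fin.mk_one]; nlinarith [sq_nonneg (a 0 - b 0), sq_nonneg (a 1 - b 1)]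
  have hmi : m 0 ^ 2 + m 1 ^ 2 < 1 := by
    simp only [unitDisk2, Set.mem_ofPred_eq] at ha hb
    simp only [hm, Pi.add_apply, Pi.smul_apply, smul_eq_mul]
    nlinarith
  have hcont : Filter.Tendsto (fun t : ℝ => (m 0 + t * (m 0 - c 0))^2 + (m 1 + t * (m 1 - c 1))^2) (nhds 0)
      (nhds ((m 0 + 0 * (m 0 - c 0))^2 + (m 1 + 0 * (m 1 - c 1))^2)) :=
    Continuous.tendsto (f := fun t : ℝ => (m 0 + t * (m 0 - c 0))^2 + (m 1 + t * (m 1 - c 1))^2)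
      (by fun_prop) 0
  have hev := hcont.eventually (gt_mem_nhds (by simpa using hmi))
  obtain ⟨ε, hε, hball⟩ := Metric.eventually_nhds_iff.1 hev
  have hm2 := hball (y := ε/2) (by rw [Real.dist_eq, sub_zero, abs_of_pos] <;> linarith)
  have hz : m + (ε/2) • (m - c) ∈ unitDisk2 := by
    simp only [unitDisk2, Set.mem_ofPred_eq, Pi.add_apply, Pi.smul_apply, smul_eq_mul, Pi.sub_apply]
    exact hm2.le
  refine hF.2.left_mem_of_mem_openSegment ⟨c, hc, rfl⟩ ⟨_, hz, rfl⟩ hfm ?_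
  refine ⟨(ε/2)/(1+ε/2), 1/(1+ε/2), by positivity, by positivity, by field_simp; ring, ?_⟩
  rw [← Convex.combo_affine_apply (f := f) (by field_simp; ring)]
  congr 1
  match_scalars <;> field_simp <;> ring

theorem cross_aux (u d z : Fin 3 → ℝ) (hu : u ≠ 0) (h1 : dotR u d = 0) (h2 : dotR u z = 0)
    (h3 : dotR (u ⨯₃ d) z = 0) (hd : d ≠ 0) : ∃ t : ℝ, z = t • d := by
  have hU : dotR u u ≠ 0 := fun h => hu (dotR_self_pos u h)
  have hD : dotR d d ≠ 0 := fun h => hd (dotR_self_pos d h)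
  simp only [dotR, Fin.sum_univ_three, cross_apply] at h1 h2 h3 hU hD
  simp at h3
  have k : ∀ i, (z ⨯₃ d) i = 0 := by
    intro i
    apply (mul_eq_zero.1 (?_ : (u 0 * u 0 + u 1 * u 1 + u 2 * u 2) * (z ⨯₃ d) i = 0)).resolve_left hU
    fin_cases i <;> simp only [cross_apply, Fin.zero_eta, Fin.mk_one, Fin.reduceFinMk, Matrix.cons_val]
    · linear_combination (-u 0) * h3 - (u 1 * z 2 - u 2 * z 1) * h1 + (u 1 * d 2 - u 2 * d 1) * h2
    · linear_combination (-u 1) * h3 - (u 2 * z 0 - u 0 * z 2) * h1 + (u 2 * d 0 - u 0 * d 2) * h2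
    · linear_combination (-u 2) * h3 - (u 0 * z 1 - u 1 * z 0) * h1 + (u 0 * d 1 - u 1 * d 0) * h2
  have k0 := k 0
  have k1 := k 1
  have k2 := k 2
  simp [cross_apply] at k0 k1 k2
  refine ⟨(z 0 * d 0 + z 1 * d 1 + z 2 * d 2)/(d 0 * d 0 + d 1 * d 1 + d 2 * d 2), ?_⟩
  ext i
  rw [Pi.smul_apply, smul_eq_mul, div_mul_eq_mul_div, eq_div_iff hD]
  fin_cases i <;> simp
  · linear_combination d 1 * k2 - d 2 * k1
  · linear_combination d 2 * k0 - d 0 * k2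
  · linear_combination d 0 * k1 - d 1 * k0

/-- A one-dimensional face of a planar convex set is exposed in it. -/
theorem planar (H F : Set (Fin 3 → ℝ)) (hH : Convex ℝ H) (hF : IsFaceOf H F) (u p q : Fin 3 → ℝ)
    (hu : u ≠ 0) (hHu : ∀ x ∈ H, dotR u (x - p) = 0) (hp : p ∈ F) (hq : q ∈ F) (hqp : q ≠ p)
    (hl : ∀ z ∈ F, ∃ t : ℝ, z = p + t • (q - p)) :
    ∃ w : Fin 3 → ℝ, (∀ x ∈ H, 0 ≤ dotR w (x - p)) ∧ (∀ x ∈ H, dotR w (x - p) = 0 ↔ x ∈ F) := by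
  set w := u ⨯₃ (q - p) with hw
  have hwq : dotR w (q - p) = 0 := by
    simp [hw, dotR, Fin.sum_univ_three, cross_apply]; ring
  have key : ∀ x ∈ H, dotR w (x - p) = 0 ↔ x ∈ F := by
    intro x hx
    constructor
    · intro h
      obtain ⟨t, ht⟩ := cross_aux u (q - p) (x - p) hu (hHu q (hF.2.subset hq)) (hHu x hx) h
        (sub_ne_zero.2 hqp)
      exact line_mem hF hp hq hx t (by rw [← ht]; abel)
    · intro h
      obtain ⟨t, ht⟩ := hl x h
      rw [ht, add_sub_cancel_left, dotR_smul_right, hwq, mul_zero]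
  have side : ∀ x ∈ H, ∀ y ∈ H, 0 < dotR w (x - p) → ¬ dotR w (y - p) < 0 := by
    intro x hx y hy h1 h2
    set a := dotR w (x - p)
    set b := dotR w (y - p)
    have hab : 0 < a - b := by linarith
    set m := (-b/(a-b)) • x + (a/(a-b)) • y with hm
    have s1 : 0 < -b/(a-b) := div_pos (by linarith) hab
    have s2 : 0 < a/(a-b) := div_pos h1 hab
    have s3 : -b/(a-b) + a/(a-b) = 1 := by field_simp; ring
    have hmH : m ∈ H := hH hx hy s1.le s2.le s3
    have hmp : m - p = (-b/(a-b)) • (x - p) + (a/(a-b)) • (y - p) := by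
      rw [hm]; match_scalars <;> field_simp; ring
    have hm0 : dotR w (m - p) = 0 := by
      rw [hmp, dotR_add_right, dotR_smul_right, dotR_smul_right]
      change -b/(a-b) * a + a/(a-b) * b = 0
      ring
    have hmF := (key m hmH).1 hm0
    have hxF := hF.2.left_mem_of_mem_openSegment hx hy hmF ⟨_, _, s1, s2, s3, rfl⟩
    exact h1.ne' ((key x hx).2 hxF)
  by_cases hpos : ∀ x ∈ H, 0 ≤ dotR w (x - p)
  · exact ⟨w, hpos, key⟩
  · push Not at hpos
    obtain ⟨y, hy, hy0⟩ := hpos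
    have hneg : ∀ x, dotR (-w) x = - dotR w x := fun x => by simp [dotR]
    refine ⟨-w, fun x hx => ?_, fun x hx => ?_⟩
    · rw [hneg]
      by_contra hcon
      exact side x hx y hy (by linarith) hy0
    · rw [hneg, neg_eq_zero]; exact key x hx

def bf (M : Matrix (Fin 4) (Fin 4) ℂ) (x y : Fin 4 → ℂ) : ℂ := star x ⬝ᵥ (M *ᵥ y)

theorem bf_add_left (M : Matrix (Fin 4) (Fin 4) ℂ) (x y z : Fin 4 → ℂ) :
    bf M (x + y) z = bf M x z + bf M y z := by simp [bf, add_dotProduct]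
theorem bf_add_right (M : Matrix (Fin 4) (Fin 4) ℂ) (x y z : Fin 4 → ℂ) :
    bf M x (y + z) = bf M x y + bf M x z := by simp [bf, mulVec_add]
theorem bf_smul_left (M : Matrix (Fin 4) (Fin 4) ℂ) (c : ℂ) (x z : Fin 4 → ℂ) :
    bf M (c • x) z = star c * bf M x z := by simp [bf]
theorem bf_smul_right (M : Matrix (Fin 4) (Fin 4) ℂ) (c : ℂ) (x z : Fin 4 → ℂ) :
    bf M x (c • z) = c * bf M x z := by simp [bf, mulVec_smul]
theorem bf_star {M : Matrix (Fin 4) (Fin 4) ℂ} (hM : M.IsHermitian) (x y : Fin 4 → ℂ) :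
    star (bf M x y) = bf M y x := by
  unfold bf
  rw [star_dotProduct, star_star, star_mulVec, hM.eq, ← dotProduct_mulVec]

theorem bf_expand {M : Matrix (Fin 4) (Fin 4) ℂ} (hM : M.IsHermitian) (x y : Fin 4 → ℂ) (s : ℂ) :
    (bf M (s • x + y) (s • x + y)).re
      = Complex.normSq s * (bf M x x).re + 2 * (star s * bf M x y).re + (bf M y y).re := by
  have h := congrArg Complex.re (bf_star hM x y)
  have h' := congrArg Complex.im (bf_star hM x y)
  have h2 := congrArg Complex.im (bf_star hM x x)
  simp at h h' h2
  have h3 : (bf M x x).im = 0 := by linarith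
  simp [bf_add_left, bf_add_right, bf_smul_left, bf_smul_right, Complex.normSq_apply, ← h, ← h', h3]
  ring

/-- Cauchy-Schwarz kernel lemma on a subspace. -/
theorem ker_aux {M : Matrix (Fin 4) (Fin 4) ℂ} (hM : M.IsHermitian) (N : Submodule ℂ (Fin 4 → ℂ))
    (hN : ∀ x ∈ N, 0 ≤ (bf M x x).re) (x : Fin 4 → ℂ) (hx : x ∈ N) (h0 : (bf M x x).re = 0) :
    ∀ n ∈ N, bf M n x = 0 := by
  intro n hn
  set c := bf M n x with hc
  by_contra hcne
  have hk : 0 < Complex.normSq c := Complex.normSq_pos.2 hcne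
  have hq := hN n hn
  set q := (bf M n n).re with hqd
  have := hN (((-(1/(q+1)) : ℝ) * c) • n + x) (N.add_mem (N.smul_mem _ hn) hx)
  rw [bf_expand hM, h0, ← hc, ← hqd] at this
  have e1 : Complex.normSq (((-(1/(q+1)) : ℝ) : ℂ) * c) = (1/(q+1))^2 * Complex.normSq c := by
    rw [Complex.normSq_mul, Complex.normSq_ofReal]; ring
  have e2 : (star (((-(1/(q+1)) : ℝ) : ℂ) * c) * c).re = -(1/(q+1)) * Complex.normSq c := by
    simp [Complex.normSq_apply]; ring
  rw [e1, e2] at this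
  have h5 : (1/(q+1))^2 * Complex.normSq c * q + 2 * (-(1/(q+1)) * Complex.normSq c) + 0
     = -(Complex.normSq c) * (q+2) / (q+1)^2 := by field_simp; ring
  rw [h5] at this
  have : 0 < (Complex.normSq c) * (q+2) / (q+1)^2 := by positivity
  have e : -(Complex.normSq c) * (q+2) / (q+1)^2 = -((Complex.normSq c) * (q+2) / (q+1)^2) := by ring
  linarith

theorem bf_zero_of_all {M : Matrix (Fin 4) (Fin 4) ℂ} (x : Fin 4 → ℂ)
    (h : ∀ n, bf M n x = 0) : M *ᵥ x = 0 := by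
  have := h (M *ᵥ x)
  unfold bf at this
  rwa [dotProduct_star_self_eq_zero] at this

theorem psd_ker {M : Matrix (Fin 4) (Fin 4) ℂ} (hM : M.IsHermitian)
    (hN : ∀ x, 0 ≤ (bf M x x).re) (x : Fin 4 → ℂ) (h0 : (bf M x x).re = 0) : M *ᵥ x = 0 :=
  bf_zero_of_all x fun n => ker_aux hM ⊤ (fun x _ => hN x) x trivial h0 n trivial

def sm (A : Fin 3 → Matrix (Fin 4) (Fin 4) ℂ) (p u : Fin 3 → ℝ) : Matrix (Fin 4) (Fin 4) ℂ :=
  ∑ i, (u i : ℂ) • (A i - (p i : ℂ) • (1 : Matrix (Fin 4) (Fin 4) ℂ))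

theorem sm_herm {A : Fin 3 → Matrix (Fin 4) (Fin 4) ℂ} (hA : ∀ i, (A i).IsHermitian)
    (p u : Fin 3 → ℝ) : (sm A p u).IsHermitian := by
  unfold sm Matrix.IsHermitian
  rw [conjTranspose_sum]
  refine Finset.sum_congr rfl fun i _ => ?_
  simp [conjTranspose_smul, conjTranspose_sub, (hA i).eq]

theorem sm_trace (A : Fin 3 → Matrix (Fin 4) (Fin 4) ℂ) (p u : Fin 3 → ℝ)
    (ρ : Matrix (Fin 4) (Fin 4) ℂ) (hρ : ρ.trace.im = 0) :
    (ρ * sm A p u).trace.re = ∑ i, u i * ((ρ * A i).trace.re - ρ.trace.re * p i) := by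
  unfold sm
  rw [Finset.mul_sum, trace_sum, Complex.re_sum]
  refine Finset.sum_congr rfl fun i _ => ?_
  rw [Matrix.mul_smul, mul_sub, Matrix.mul_smul, mul_one, trace_smul, trace_sub, trace_smul, smul_eq_mul, smul_eq_mul,
    Complex.re_ofReal_mul, Complex.sub_re, Complex.re_ofReal_mul, mul_comm (p i)]

theorem trace_vec (M : Matrix (Fin 4) (Fin 4) ℂ) (x : Fin 4 → ℂ) :
    (vecMulVec x (star x) * M).trace = bf M x x := by
  rw [vecMulVec_mul, trace_vecMulVec, dotProduct_comm, bf, dotProduct_mulVec]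

theorem dens (A : Fin 3 → Matrix (Fin 4) (Fin 4) ℂ) (p z : Fin 3 → ℝ) (hz : z ∈ JNR A) :
    ∃ (m : ℕ) (b : Fin m → Fin 4 → ℂ), (∃ j, b j ≠ 0) ∧
      ∀ u, dotR u (z - p) = ∑ j, (bf (sm A p u) (b j) (b j)).re := by
  obtain ⟨ρ, ⟨h1, h2⟩, rfl⟩ := hz
  obtain ⟨m, b, hb⟩ := Matrix.posSemidef_iff_eq_sum_vecMulVec.1 h1
  refine ⟨m, b, ?_, ?_⟩
  · by_contra hcon
    push Not at hcon
    rw [hb] at h2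
    simp [hcon] at h2
  · intro u
    have h3 := sm_trace A p u ρ (by simp [h2])
    rw [h2] at h3
    have h4 : dotR u (wpt A ρ - p) = (ρ * sm A p u).trace.re := by
      rw [h3]; simp [dotR, wpt]
    rw [h4, hb, Finset.sum_mul, trace_sum, Complex.re_sum]
    refine Finset.sum_congr rfl fun i _ => ?_
    rw [trace_vec]

theorem vec_pt (A : Fin 3 → Matrix (Fin 4) (Fin 4) ℂ) (p : Fin 3 → ℝ) (x : Fin 4 → ℂ) (hx : x ≠ 0) :
    ∃ z ∈ JNR A, ∃ c : ℝ, 0 < c ∧ ∀ u, (bf (sm A p u) x x).re = c * dotR u (z - p) := by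
  have hpos : (0:ℂ) < x ⬝ᵥ star x := by
    rw [dotProduct_comm]; exact dotProduct_star_self_pos_iff.2 hx
  obtain ⟨hc, him⟩ := Complex.lt_def.1 hpos
  set c := (x ⬝ᵥ star x).re with hcd
  have hxx : x ⬝ᵥ star x = (c : ℂ) := by
    apply Complex.ext
    · simp [hcd]
    · simpa using him.symm
  simp only [Complex.zero_re] at hc
  set ρ := ((c⁻¹ : ℝ) : ℂ) • vecMulVec x (star x) with hρ
  have htr : ρ.trace = 1 := by
    rw [hρ, trace_smul, trace_vecMulVec, hxx, smul_eq_mul]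
    push_cast
    exact inv_mul_cancel₀ (by exact_mod_cast hc.ne')
  have hpsd : ρ.PosSemidef := by
    refine (posSemidef_vecMulVec_self_star x).smul ?_
    exact_mod_cast (inv_pos.2 hc).le
  refine ⟨wpt A ρ, ⟨ρ, ⟨hpsd, htr⟩, rfl⟩, c, hc, fun u => ?_⟩
  have h3 := sm_trace A p u ρ (by simp [htr])
  rw [htr] at h3
  have h4 : dotR u (wpt A ρ - p) = (ρ * sm A p u).trace.re := by
    rw [h3]; simp [dotR, wpt]
  rw [h4, hρ, smul_mul_assoc, trace_smul, trace_vec, smul_eq_mul, Complex.re_ofReal_mul]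
  field_simp

theorem JNR_convex (A : Fin 3 → Matrix (Fin 4) (Fin 4) ℂ) : Convex ℝ (JNR A) := by
  rintro _ ⟨ρ, ⟨h1, h2⟩, rfl⟩ _ ⟨σ, ⟨h3, h4⟩, rfl⟩ a b ha hb hab
  refine ⟨(a:ℂ) • ρ + (b:ℂ) • σ, ⟨?_, ?_⟩, ?_⟩
  · exact (h1.smul (by exact_mod_cast ha)).add (h3.smul (by exact_mod_cast hb))
  · rw [trace_add, trace_smul, trace_smul, h2, h4]
    simp; exact_mod_cast hab
  · ext i
    simp [wpt, add_mul]

theorem sm_add (A : Fin 3 → Matrix (Fin 4) (Fin 4) ℂ) (p u v : Fin 3 → ℝ) (x : Fin 4 → ℂ) :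
    (bf (sm A p (u + v)) x x) = bf (sm A p u) x x + bf (sm A p v) x x := by
  have : sm A p (u + v) = sm A p u + sm A p v := by
    simp [sm, add_smul, Finset.sum_add_distrib]
  simp [this, bf, add_mulVec]

theorem sm_smul (A : Fin 3 → Matrix (Fin 4) (Fin 4) ℂ) (p u : Fin 3 → ℝ) (c : ℝ) (x : Fin 4 → ℂ) :
    (bf (sm A p (c • u)) x x).re = c * (bf (sm A p u) x x).re := by
  have : sm A p (c • u) = (c : ℂ) • sm A p u := by
    simp [sm, mul_smul, Finset.smul_sum]
  simp [this, bf, smul_mulVec]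

theorem bf_cont (M : Matrix (Fin 4) (Fin 4) ℂ) : Continuous fun x => (bf M x x).re := by
  unfold bf
  fun_prop

/-- perturbation lemma -/
theorem perturb {M K : Matrix (Fin 4) (Fin 4) ℂ} (hM : M.IsHermitian) (hK : K.IsHermitian)
    (hpos : ∀ x, 0 ≤ (bf M x x).re) (hker : ∀ x, M *ᵥ x = 0 → K *ᵥ x = 0) :
    ∃ ε : ℝ, 0 < ε ∧ ∀ x, 0 ≤ (bf M x x).re + ε * (bf K x x).re := by
  obtain ⟨Y, hY⟩ := Submodule.exists_isCompl (LinearMap.ker M.mulVecLin)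
  have hYpos : ∀ y : Y, y ≠ 0 → 0 < (bf M y y).re := by
    intro y hy
    refine lt_of_le_of_ne (hpos _) fun h => hy ?_
    have h1 := psd_ker hM hpos y h.symm
    have : (y : Fin 4 → ℂ) ∈ (⊥ : Submodule ℂ (Fin 4 → ℂ)) := by
      rw [← hY.inf_eq_bot]
      exact ⟨by simpa using h1, y.2⟩
    simpa using this
  have hmain : ∃ ε : ℝ, 0 < ε ∧ ∀ y : Y, 0 ≤ (bf M y y).re + ε * (bf K y y).re := by
    have hcomp : IsCompact (Metric.sphere (0 : Y) 1) := isCompact_sphere _ _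
    have hcM : Continuous fun y : Y => (bf M y y).re := (bf_cont M).comp continuous_subtype_val
    have hcK : Continuous fun y : Y => (bf K y y).re := (bf_cont K).comp continuous_subtype_val
    rcases (Metric.sphere (0 : Y) 1).eq_empty_or_nonempty with he | hne
    · refine ⟨1, one_pos, fun y => ?_⟩
      have : y = 0 := by
        by_contra hy
        have : ((‖y‖⁻¹ : ℝ) : ℂ) • y ∈ Metric.sphere (0 : Y) 1 := by
          simp [norm_smul, hy]
        rw [he] at this
        exact this
      simp [this, bf]
    obtain ⟨y0, hy0, hmin⟩ := hcomp.exists_isMinOn hne hcM.continuousOn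
    obtain ⟨y1, hy1, hmin1⟩ := hcomp.exists_isMinOn hne hcK.continuousOn
    have hm : 0 < (bf M y0 y0).re := hYpos y0 (by rintro rfl; simp at hy0)
    set m := (bf M y0 y0).re
    set k := (bf K y1 y1).re
    have hk : 0 < |k| + 1 := by positivity
    refine ⟨m / (|k| + 1), by positivity, fun y => ?_⟩
    by_cases hy : y = 0
    · simp [hy, bf]
    have hy' : 0 < ‖y‖ := norm_pos_iff.2 hy
    set z : Y := ((‖y‖⁻¹ : ℝ) : ℂ) • y with hz
    have hzs : z ∈ Metric.sphere (0 : Y) 1 := by simp [hz, norm_smul, hy]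
    have e1 : m ≤ (bf M z z).re := hmin hzs
    have e2 : k ≤ (bf K z z).re := hmin1 hzs
    have hom : ∀ L : Matrix (Fin 4) (Fin 4) ℂ, (bf L y y).re = ‖y‖^2 * (bf L z z).re := by
      intro L
      simp only [hz, Submodule.coe_smul, bf_smul_left, bf_smul_right]
      rw [← mul_assoc]
      have : ((‖y‖⁻¹ : ℝ) : ℂ) * star ((‖y‖⁻¹ : ℝ) : ℂ) = (((‖y‖^2)⁻¹ : ℝ) : ℂ) := by
        simp; ring
      rw [this, Complex.re_ofReal_mul]
      field_simp
    rw [hom M, hom K]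
    have e3 : m / (|k| + 1) * k ≤ m / (|k| + 1) * (bf K z z).re := by gcongr
    have e4 : -m ≤ m / (|k| + 1) * k := by
      rw [div_mul_eq_mul_div, le_div_iff₀ hk]
      nlinarith [neg_abs_le k]
    have : 0 ≤ (bf M z z).re + m / (|k| + 1) * (bf K z z).re := by linarith
    nlinarith [sq_nonneg ‖y‖, mul_nonneg (sq_nonneg ‖y‖) this]
  obtain ⟨ε, hε, h⟩ := hmain
  refine ⟨ε, hε, fun x => ?_⟩
  have hx : x ∈ LinearMap.ker M.mulVecLin ⊔ Y := by rw [hY.sup_eq_top]; trivial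
  obtain ⟨s, hs, y, hy, rfl⟩ := Submodule.mem_sup.1 hx
  have hs : M *ᵥ s = 0 := by simpa using hs
  have hs' := hker s hs
  have gen : ∀ L : Matrix (Fin 4) (Fin 4) ℂ, L.IsHermitian → L *ᵥ s = 0 →
      (bf L (s + y) (s + y)).re = (bf L y y).re := by
    intro L hL h0
    have a1 : ∀ n, bf L n s = 0 := fun n => by simp [bf, h0]
    have a2 : ∀ n, bf L s n = 0 := fun n => by rw [← bf_star hL, a1]; simp
    simp [bf_add_left, bf_add_right, a1, a2]
  rw [gen M hM hs, gen K hK hs']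
  exact h ⟨y, hy⟩

theorem corner (A : Fin 3 → Matrix (Fin 4) (Fin 4) ℂ) (hA : ∀ i, (A i).IsHermitian)
    (u v w p q h g d : Fin 3 → ℝ)
    (hpW : p ∈ JNR A) (hqW : q ∈ JNR A) (hhW : h ∈ JNR A) (hgW : g ∈ JNR A)
    (hu : ∀ z ∈ JNR A, 0 ≤ dotR u (z - p)) (hv : ∀ z ∈ JNR A, 0 ≤ dotR v (z - p))
    (hw : ∀ z ∈ JNR A, dotR u (z - p) = 0 → 0 ≤ dotR w (z - p))
    (hq1 : dotR u (q - p) = 0) (hq2 : dotR w (q - p) = 0) (hq3 : dotR v (q - p) ≠ 0)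
    (hh1 : dotR u (h - p) = 0) (hh2 : dotR w (h - p) ≠ 0)
    (hg1 : dotR u (g - p) ≠ 0) (hg2 : dotR v (g - p) = 0)
    (hGH : ∀ z ∈ JNR A, dotR u (z - p) = 0 → dotR v (z - p) = 0 → z = p)
    (hGl : ∀ z ∈ JNR A, dotR v (z - p) = 0 → ∃ t : ℝ, z - p = t • d) :
    IsCornerPoint (JNR A) p := by
  set U := sm A p u with hU
  set V := sm A p v with hV
  set K := sm A p w with hK
  have hUh : U.IsHermitian := sm_herm hA p u
  have hVh : V.IsHermitian := sm_herm hA p v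
  have hKh : K.IsHermitian := sm_herm hA p w
  have hUp : ∀ x, 0 ≤ (bf U x x).re := by
    intro x
    by_cases hx : x = 0
    · simp [hx, bf]
    obtain ⟨z, hz, c, hc, hzu⟩ := vec_pt A p x hx
    rw [hzu u]; exact mul_nonneg hc.le (hu z hz)
  have hVp : ∀ x, 0 ≤ (bf V x x).re := by
    intro x
    by_cases hx : x = 0
    · simp [hx, bf]
    obtain ⟨z, hz, c, hc, hzu⟩ := vec_pt A p x hx
    rw [hzu v]; exact mul_nonneg hc.le (hv z hz)
  have zero_of : ∀ (M : Matrix (Fin 4) (Fin 4) ℂ) x, M *ᵥ x = 0 → (bf M x x).re = 0 := by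
    intro M x hx; simp [bf, hx]
  have hKp : ∀ x, U *ᵥ x = 0 → 0 ≤ (bf K x x).re := by
    intro x hUx
    by_cases hx : x = 0
    · simp [hx, bf]
    obtain ⟨z, hz, c, hc, hzu⟩ := vec_pt A p x hx
    have h1 := zero_of U x hUx
    rw [hzu u] at h1
    rw [hzu w]; exact mul_nonneg hc.le (hw z hz ((mul_eq_zero.1 h1).resolve_left hc.ne'))
  -- vectors from points
  have splitU : ∀ z ∈ JNR A, ∃ (m : ℕ) (b : Fin m → Fin 4 → ℂ),
      (dotR u (z - p) = 0 → ∀ j, U *ᵥ b j = 0) ∧ (dotR v (z - p) = 0 → ∀ j, V *ᵥ b j = 0) ∧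
      (dotR u (z - p) = 0 → dotR w (z - p) = 0 → ∀ j, (bf K (b j) (b j)).re = 0) ∧
      (dotR u (z - p) ≠ 0 → ∃ j, U *ᵥ b j ≠ 0) ∧ (dotR v (z - p) ≠ 0 → ∃ j, V *ᵥ b j ≠ 0) ∧
      (dotR w (z - p) ≠ 0 → ∃ j, (bf K (b j) (b j)).re ≠ 0) := by
    intro z hz
    obtain ⟨m, b, -, hb⟩ := dens A p z hz
    have hkU : dotR u (z - p) = 0 → ∀ j, U *ᵥ b j = 0 := by
      intro h0 j
      rw [hb u, Finset.sum_eq_zero_iff_of_nonneg (fun j _ => hUp (b j))] at h0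
      exact psd_ker hUh hUp _ (h0 j (Finset.mem_univ j))
    refine ⟨m, b, hkU, ?_, ?_, ?_, ?_, ?_⟩
    · intro h0 j
      rw [hb v, Finset.sum_eq_zero_iff_of_nonneg (fun j _ => hVp (b j))] at h0
      exact psd_ker hVh hVp _ (h0 j (Finset.mem_univ j))
    · intro h0 h1 j
      rw [hb w, Finset.sum_eq_zero_iff_of_nonneg (fun j _ => hKp (b j) (hkU h0 j))] at h1
      exact h1 j (Finset.mem_univ j)
    · intro h0
      by_contra hcon
      push Not at hcon
      exact h0 (by rw [hb u]; exact Finset.sum_eq_zero fun j _ => zero_of U _ (hcon j))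
    · intro h0
      by_contra hcon
      push Not at hcon
      exact h0 (by rw [hb v]; exact Finset.sum_eq_zero fun j _ => zero_of V _ (hcon j))
    · intro h0
      by_contra hcon
      push Not at hcon
      exact h0 (by rw [hb w]; exact Finset.sum_eq_zero fun j _ => hcon j)
  obtain ⟨r, hr1, hr2, hr3⟩ : ∃ r, U *ᵥ r = 0 ∧ (bf K r r).re = 0 ∧ V *ᵥ r ≠ 0 := by
    obtain ⟨m, b, a1, a2, a3, a4, a5, a6⟩ := splitU q hqW
    obtain ⟨j, hj⟩ := a5 hq3
    exact ⟨b j, a1 hq1 j, a3 hq1 hq2 j, hj⟩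
  obtain ⟨n, hn1, hn2⟩ : ∃ n, U *ᵥ n = 0 ∧ (bf K n n).re ≠ 0 := by
    obtain ⟨m, b, a1, a2, a3, a4, a5, a6⟩ := splitU h hhW
    obtain ⟨j, hj⟩ := a6 hh2
    exact ⟨b j, a1 hh1 j, hj⟩
  obtain ⟨f, hf1, hf2⟩ : ∃ f, V *ᵥ f = 0 ∧ U *ᵥ f ≠ 0 := by
    obtain ⟨m, b, a1, a2, a3, a4, a5, a6⟩ := splitU g hgW
    obtain ⟨j, hj⟩ := a4 hg1
    exact ⟨b j, a2 hg2 j, hj⟩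
  have hKN : ∀ x, U *ᵥ x = 0 → (bf K x x).re = 0 → ∀ y, U *ᵥ y = 0 → bf K y x = 0 := by
    intro x hx h0 y hy
    exact ker_aux hKh (LinearMap.ker U.mulVecLin) (fun x hx => hKp x (by simpa using hx)) x
      (by simpa using hx) h0 y (by simpa using hy)
  -- common kernel
  have hker : ∀ e, U *ᵥ e = 0 → V *ᵥ e = 0 → K *ᵥ e = 0 := by
    intro e he1 he2
    by_cases he0 : e = 0
    · simp [he0]
    have heK : (bf K e e).re = 0 := by
      obtain ⟨z, hz, c, hc, hzu⟩ := vec_pt A p e he0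
      have h1 := zero_of U e he1
      rw [hzu u] at h1
      have h2 := zero_of V e he2
      rw [hzu v] at h2
      have := hGH z hz ((mul_eq_zero.1 h1).resolve_left hc.ne')
        ((mul_eq_zero.1 h2).resolve_left hc.ne')
      rw [hzu w, this]; simp [dotR]
    have hefU : bf U e f = 0 := by
      rw [← bf_star hUh]; simp [bf, he1]
    have hUf : (bf U f f).re ≠ 0 := fun h => hf2 (psd_ker hUh hUp f h)
    have hline : ∀ s : ℂ, ∃ t : ℝ, (bf U (s • e + f) (s • e + f)).re = t * dotR u d ∧
        (bf K (s • e + f) (s • e + f)).re = t * dotR w d := by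
      intro s
      have hVs : V *ᵥ (s • e + f) = 0 := by rw [mulVec_add, mulVec_smul, he2, hf1]; simp
      have hs0 : s • e + f ≠ 0 := by
        intro h0
        apply hf2
        have := congrArg (fun x => U *ᵥ x) h0
        simpa [mulVec_add, mulVec_smul, he1] using this
      obtain ⟨z, hz, c, hc, hzu⟩ := vec_pt A p _ hs0
      have h2 := zero_of V _ hVs
      rw [hzu v] at h2
      obtain ⟨t, ht⟩ := hGl z hz ((mul_eq_zero.1 h2).resolve_left hc.ne')
      refine ⟨c * t, ?_, ?_⟩
      · rw [hzu u, ht, dotR_smul_right]; ring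
      · rw [hzu w, ht, dotR_smul_right]; ring
    have hUconst : ∀ s : ℂ, (bf U (s • e + f) (s • e + f)).re = (bf U f f).re := by
      intro s
      rw [bf_expand hUh, hefU, zero_of U e he1]; simp
    have hud : dotR u d ≠ 0 := by
      intro h0
      obtain ⟨t, ht, -⟩ := hline 0
      rw [hUconst, h0, mul_zero] at ht
      exact hUf ht
    have hKconst : ∀ s : ℂ, 2 * (star s * bf K e f).re + (bf K f f).re
        = (bf U f f).re / dotR u d * dotR w d := by
      intro s
      obtain ⟨t, ht, ht2⟩ := hline s
      rw [hUconst] at ht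
      rw [bf_expand hKh, heK, mul_zero, zero_add] at ht2
      rw [ht2, ht]; field_simp
    have hef : bf K f e = 0 := by
      have h0 := hKconst 0
      have h1 := hKconst (bf K e f)
      have : (star (bf K e f) * bf K e f).re = Complex.normSq (bf K e f) := by
        simp [Complex.normSq_apply]
      rw [this] at h1
      simp only [star_zero, zero_mul, Complex.zero_re] at h0
      have : Complex.normSq (bf K e f) = 0 := by linarith
      rw [← bf_star hKh, Complex.normSq_eq_zero.1 this, star_zero]
    have hli : LinearIndependent ℂ ![e, r, n, f] := by
      rw [Fintype.linearIndependent_iff]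
      intro c hc
      simp [Fin.sum_univ_four] at hc
      have c3 : c 3 = 0 := by
        have := congrArg (fun x => U *ᵥ x) hc
        simp only [mulVec_add, mulVec_smul, he1, hr1, hn1] at this
        simpa [hf2] using this
      rw [c3, zero_smul, add_zero] at hc
      have c2 : c 2 = 0 := by
        have := congrArg (fun x => bf K n x) hc
        simp only [bf_add_right, bf_smul_right, hKN e he1 heK n hn1, hKN r hr1 hr2 n hn1] at this
        have hnn : bf K n n ≠ 0 := fun h => hn2 (by rw [h]; rfl)
        have z0 : bf K n 0 = 0 := by simp [bf]
        rw [z0] at this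
        simpa [hnn] using this
      rw [c2, zero_smul, add_zero] at hc
      have c1 : c 1 = 0 := by
        have := congrArg (fun x => V *ᵥ x) hc
        simp only [mulVec_add, mulVec_smul, he2] at this
        simpa [hr3] using this
      rw [c1, zero_smul, add_zero] at hc
      have c0 : c 0 = 0 := by simpa [he0] using hc
      intro i
      fin_cases i <;> assumption
    have hspan := hli.span_eq_top_of_card_eq_finrank (by simp)
    apply bf_zero_of_all
    intro x
    have hx : x ∈ Submodule.span ℂ (Set.range ![e, r, n, f]) := by rw [hspan]; trivial
    induction hx using Submodule.span_induction with
    | mem x hx =>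
      obtain ⟨i, rfl⟩ := hx
      fin_cases i
      · exact hKN e he1 heK e he1
      · exact hKN e he1 heK r hr1
      · exact hKN e he1 heK n hn1
      · exact hef
    | zero => simp [bf]
    | add x y _ _ hx hy => rw [bf_add_left, hx, hy, add_zero]
    | smul c x _ hx => rw [bf_smul_left, hx, mul_zero]
  have hUV : ∀ x, bf (U + V) x x = bf U x x + bf V x x := fun x => by simp [bf, add_mulVec]
  have hUVp : ∀ x, 0 ≤ (bf (U + V) x x).re := fun x => by
    rw [hUV, Complex.add_re]; exact add_nonneg (hUp x) (hVp x)
  obtain ⟨ε, hε, hpert⟩ := perturb (M := U + V) (K := K) (hUh.add hVh) hKh hUVp (by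
    intro x hx
    have h0 := zero_of _ _ hx
    rw [hUV, Complex.add_re] at h0
    exact hker x (psd_ker hUh hUp x (by linarith [hUp x, hVp x]))
      (psd_ker hVh hVp x (by linarith [hUp x, hVp x])))
  have hmem : ∀ z ∈ JNR A, 0 ≤ dotR (u + v + ε • w) (z - p) := by
    intro z hz
    obtain ⟨m, b, -, hb⟩ := dens A p z hz
    rw [hb]
    refine Finset.sum_nonneg fun j _ => ?_
    rw [sm_add, sm_add, Complex.add_re, sm_smul, ← hUV]
    exact hpert _
  refine ⟨hpW, ?_⟩
  have huS : u ∈ Submodule.span ℝ (normalConeAt (JNR A) p) :=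
    Submodule.subset_span fun y hy => by rw [dotR_comm]; exact hu y hy
  have hvS : v ∈ Submodule.span ℝ (normalConeAt (JNR A) p) :=
    Submodule.subset_span fun y hy => by rw [dotR_comm]; exact hv y hy
  have hwS : w ∈ Submodule.span ℝ (normalConeAt (JNR A) p) := by
    have h1 : u + v + ε • w ∈ Submodule.span ℝ (normalConeAt (JNR A) p) :=
      Submodule.subset_span fun y hy => by rw [dotR_comm]; exact hmem y hy
    have h2 : w = ε⁻¹ • ((u + v + ε • w) - (u + v)) := by
      rw [add_sub_cancel_left, smul_smul, inv_mul_cancel₀ hε.ne', one_smul]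
    rw [h2]
    exact Submodule.smul_mem _ _ (Submodule.sub_mem _ h1 (Submodule.add_mem _ huS hvS))
  have hli : LinearIndependent ℝ ![u, v, w] := by
    rw [Fintype.linearIndependent_iff]
    intro c hc
    simp [Fin.sum_univ_three] at hc
    have hd : ∀ x, c 0 * dotR u x + c 1 * dotR v x + c 2 * dotR w x = 0 := by
      intro x
      rw [← dotR_smul_left, ← dotR_smul_left, ← dotR_smul_left, ← dotR_add_left, ← dotR_add_left, hc]
      simp [dotR]
    have c1 : c 1 = 0 := by
      have := hd (q - p)
      rw [hq1, hq2] at this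
      simpa [hq3] using this
    have c2 : c 2 = 0 := by
      have := hd (h - p)
      rw [hh1, c1] at this
      simpa [hh2] using this
    have c0 : c 0 = 0 := by
      have := hd (g - p)
      rw [c1, c2] at this
      simpa [hg1] using this
    intro i
    fin_cases i <;> assumption
  have hspan := hli.span_eq_top_of_card_eq_finrank (by simp)
  rw [eq_top_iff, ← hspan, Submodule.span_le]
  rintro _ ⟨i, rfl⟩
  fin_cases i
  · exact huS
  · exact hvS
  · exact hwS

/-- if a one-dimensional nonexposed face `F₂` of `W` meets a
one-dimensional exposed face `G` of `W` in the point `p`, then `p` is a corner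
point of `W` or both `F₂` and `G` lie in a common non-elliptic face of `W`. -/
theorem stmt7 (A : Fin 3 → Matrix (Fin 4) (Fin 4) ℂ)
    (hA : ∀ i, (A i).IsHermitian)
    (hdim : convDim (JNR A) = 3)
    (F₂ G : Set (Fin 3 → ℝ)) (p : Fin 3 → ℝ)
    (hF₂ : IsFaceOf (JNR A) F₂) (hF₂d : convDim F₂ = 1)
    (hF₂ne : ¬ IsExposedFace (JNR A) F₂)
    (hG : IsExposedFace (JNR A) G) (hGd : convDim G = 1)
    (hp : F₂ ∩ G = {p}) :
    IsCornerPoint (JNR A) p ∨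
      ∃ H, IsNonEllipticFace (JNR A) H ∧ F₂ ⊆ H ∧ G ⊆ H := by
  have hpF : p ∈ F₂ := by have : p ∈ F₂ ∩ G := by rw [hp]; rfl
                          exact this.1
  have hpG : p ∈ G := by have : p ∈ F₂ ∩ G := by rw [hp]; rfl
                         exact this.2
  have hW := JNR_convex A
  have hpW : p ∈ JNR A := hF₂.2.subset hpF
  obtain ⟨u, hu0, hu⟩ := support _ _ hW hdim hF₂ hF₂d p hpF
  set H := {x ∈ JNR A | ∀ y ∈ JNR A, dotR u x ≤ dotR u y} with hHd
  have hHf : IsFaceOf (JNR A) H := exposed_face hW u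
  have hHW : H ⊆ JNR A := hHf.2.subset
  have hFH : F₂ ⊆ H := fun z hz => ⟨hF₂.2.subset hz, fun y hy => hu y hy z hz⟩
  have hup : ∀ z ∈ JNR A, 0 ≤ dotR u (z - p) := fun z hz => by
    rw [dotR_sub_right]; linarith [hu z hz p hpF]
  have hHiff : ∀ z ∈ JNR A, dotR u (z - p) = 0 ↔ z ∈ H := by
    intro z hz
    rw [dotR_sub_right]
    constructor
    · intro h0
      exact ⟨hz, fun y hy => by linarith [hu y hy p hpF]⟩
    · intro h0
      linarith [h0.2 p hpW, hu z hz p hpF]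
  obtain ⟨h, hhH, hhF⟩ : ∃ h ∈ H, h ∉ F₂ := by
    by_contra hcon
    push Not at hcon
    exact hF₂ne ⟨u, Set.Subset.antisymm hFH hcon⟩
  obtain ⟨q, hq, hqp, hql⟩ := dim1 F₂ p hpF hF₂d
  have hFH' : IsFaceOf H F₂ := face_mono hF₂ hHW hFH
  have hHu : ∀ x ∈ H, dotR u (x - p) = 0 := fun x hx => (hHiff x (hHW hx)).2 hx
  by_cases hGH : G ⊆ H
  · right
    refine ⟨H, ⟨hHf, ?_, ?_⟩, hFH, hGH⟩
    · exact dim2 H u p q h hu0 (hFH hpF) (hFH hq) hhH hHu hqp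
        fun t ht => hhF (line_mem hFH' hpF hq hhH t ht)
    · exact not_elliptic H F₂ hFH' p q h hpF hq hqp.symm hhH hhF
  · left
    obtain ⟨g, hgG, hgH⟩ := Set.not_subset.1 hGH
    obtain ⟨v, hv⟩ := hG
    have hGW : G ⊆ JNR A := by rw [hv]; exact fun x hx => hx.1
    have hpG' := hpG
    rw [hv] at hpG'
    have hvp : ∀ z ∈ JNR A, 0 ≤ dotR v (z - p) := fun z hz => by
      rw [dotR_sub_right]; linarith [hpG'.2 z hz]
    have hGiff : ∀ z ∈ JNR A, dotR v (z - p) = 0 ↔ z ∈ G := by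
      intro z hz
      rw [dotR_sub_right, hv]
      constructor
      · intro h0
        exact ⟨hz, fun y hy => by linarith [hpG'.2 y hy]⟩
      · intro h0
        linarith [h0.2 p hpW, hpG'.2 z hz]
    obtain ⟨w, hw1, hw2⟩ := planar H F₂ hHf.1 hFH' u p q hu0 hHu hpF hq hqp hql
    obtain ⟨d, hdG, hdp, hdl⟩ := dim1 G p hpG hGd
    have hqG : q ∉ G := by
      intro hqG
      have : q ∈ F₂ ∩ G := ⟨hq, hqG⟩
      rw [hp] at this
      exact hqp this
    refine corner A hA u v w p q h g (d - p) hpW (hF₂.2.subset hq) (hHW hhH) (hGW hgG) hup hvp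
      (fun z hz h0 => hw1 z ((hHiff z hz).1 h0)) (hHu q (hFH hq)) ((hw2 q (hFH hq)).2 hq)
      (fun h0 => hqG ((hGiff q (hF₂.2.subset hq)).1 h0)) (hHu h hhH)
      (fun h0 => hhF ((hw2 h hhH).1 h0)) (fun h0 => hgH ((hHiff g (hGW hgG)).1 h0))
      ((hGiff g (hGW hgG)).2 hgG) ?_ ?_
    · intro z hz h1 h2
      by_contra hzp
      have hzH := (hHiff z hz).1 h1
      have hzG := (hGiff z hz).1 h2
      apply hgH
      obtain ⟨t, ht⟩ := hdl z hzG
      obtain ⟨s, hs⟩ := hdl g hgG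
      have ht0 : t ≠ 0 := by
        rintro rfl
        exact hzp (by rw [ht]; simp)
      refine line_mem hHf (hFH hpF) hzH (hGW hgG) (s / t) ?_
      rw [ht, add_sub_cancel_left, smul_smul, div_mul_cancel₀ _ ht0]
      exact hs
    · intro z hz h2
      obtain ⟨t, ht⟩ := hdl z ((hGiff z hz).1 h2)
      exact ⟨t, by rw [ht]; simp⟩
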